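/- arXiv:2304.07664 — 4 statements merged into one kernel-verified Lean document; each statement's English description precedes it below -/
import Mathlib

section
/- For any real numbers a and b that are not both zero, the set { y ∈ (0,1) : a·g(y) + b·h(y) = 0 } contains at most two elements. -/
noncomputable def gFun (y : ℝ) : ℝ := y / Real.log (1 - y)

noncomputable def hFun (y : ℝ) : ℝ := (1 - y) / Real.log y

/-!
The function `h` is `-1` divided by the slope of the secant of `ln` from `1` to `y`. These slopes
are positive since `ln` is increasing, and strictly decreasing since `ln` is strictly concave, so
`h` is negative and strictly decreasing; as `g(y) = h(1 - y)`, the function `g` is negative and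
strictly increasing. Hence `g(x) h(y) - g(y) h(x) > 0` for `x < y` in `(0,1)`. This is the
determinant of the linear system saying that `a g + b h` vanishes at both `x` and `y`, so a
nontrivial combination has at most one zero.
-/

open Set

section LinearCombination

variable {α R : Type*} [LinearOrder α] [CommRing R] [LinearOrder R] [IsStrictOrderedRing R]
  {f g : α → R} {s : Set α}

theorem det_pos_of_strictMonoOn_of_strictAntiOn (hf : StrictMonoOn f s) (hg : StrictAntiOn g s)
    (hf_neg : ∀ x ∈ s, f x < 0) (hg_neg : ∀ x ∈ s, g x < 0) {x y : α} (hx : x ∈ s) (hy : y ∈ s)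
    (hxy : x < y) : 0 < f x * g y - f y * g x := by
  refine sub_pos.mpr ?_
  calc
    f y * g x < f x * g x := mul_lt_mul_of_neg_right (hf hx hy hxy) (hg_neg x hx)
    _ < f x * g y := mul_lt_mul_of_neg_left (hg hx hy hxy) (hf_neg x hx)

theorem subsingleton_zeros_of_strictMonoOn_of_strictAntiOn
    (hf : StrictMonoOn f s) (hg : StrictAntiOn g s)
    (hf_neg : ∀ x ∈ s, f x < 0) (hg_neg : ∀ x ∈ s, g x < 0)
    {a b : R} (hab : ¬(a = 0 ∧ b = 0)) :
    {x ∈ s | a * f x + b * g x = 0}.Subsingleton := by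
  rintro x ⟨hx, hx_zero⟩ y ⟨hy, hy_zero⟩
  by_contra hne
  wlog hxy : x < y generalizing x y
  · exact this hy hy_zero hx hx_zero (Ne.symm hne) (lt_of_le_of_ne' (not_lt.mp hxy) hne)
  have det_ne_zero : f x * g y - f y * g x ≠ 0 :=
    (det_pos_of_strictMonoOn_of_strictAntiOn hf hg hf_neg hg_neg hx hy hxy).ne'
  have ha : a * (f x * g y - f y * g x) = 0 := by
    linear_combination g y * hx_zero - g x * hy_zero
  have hb : b * (f x * g y - f y * g x) = 0 := by
    linear_combination f x * hy_zero - f y * hx_zero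
  exact hab ⟨(mul_eq_zero_iff_right det_ne_zero).mp ha,
    (mul_eq_zero_iff_right det_ne_zero).mp hb⟩

end LinearCombination

theorem strictAntiOn_slope_of_strictConcaveOn {𝕜 : Type*} [Field 𝕜] [LinearOrder 𝕜]
    [IsStrictOrderedRing 𝕜] {s : Set 𝕜} {f : 𝕜 → 𝕜} {a : 𝕜}
    (hf : StrictConcaveOn 𝕜 s f) (ha : a ∈ s) : StrictAntiOn (slope f a) (s \ {a}) := by
  intro x hx y hy hxy
  simpa only [slope_def_field] using hf.secant_strict_mono ha hx.1 hy.1 hx.2 hy.2 hxy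

theorem slope_log_one_pos {x : ℝ} (hx : x ∈ Ioi 0 \ {1}) : 0 < slope Real.log 1 x :=
  Real.strictMonoOn_log.slope_pos (mem_Ioi.mpr one_pos) hx.1 (Ne.symm hx.2)

theorem hFun_eq_neg_inv_slope_log (x : ℝ) : hFun x = -(slope Real.log 1 x)⁻¹ := by
  rw [hFun, slope_def_field, Real.log_one, sub_zero, inv_div, ← neg_div, neg_sub]

theorem gFun_eq_hFun_one_sub (x : ℝ) : gFun x = hFun (1 - x) := by
  rw [gFun, hFun, sub_sub_cancel]

theorem hFun_neg {x : ℝ} (hx : x ∈ Ioi 0 \ {1}) : hFun x < 0 := by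
  rw [hFun_eq_neg_inv_slope_log, neg_lt_zero, inv_pos]
  exact slope_log_one_pos hx

theorem strictAntiOn_hFun : StrictAntiOn hFun (Ioi 0 \ {1}) := by
  intro x hx y hy hxy
  rw [hFun_eq_neg_inv_slope_log, hFun_eq_neg_inv_slope_log, neg_lt_neg_iff]
  exact inv_strictAnti₀ (slope_log_one_pos hy)
    (strictAntiOn_slope_of_strictConcaveOn strictConcaveOn_log_Ioi (mem_Ioi.mpr one_pos) hx hy hxy)

theorem one_sub_mem_Ioi_diff_one {x : ℝ} (hx : x ∈ Iio 1 \ {0}) : 1 - x ∈ Ioi (0 : ℝ) \ {1} :=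
  ⟨mem_Ioi.mpr (sub_pos.mpr hx.1), fun h ↦ hx.2 (sub_eq_self.mp h)⟩

theorem gFun_neg {x : ℝ} (hx : x ∈ Iio 1 \ {0}) : gFun x < 0 := by
  rw [gFun_eq_hFun_one_sub]
  exact hFun_neg (one_sub_mem_Ioi_diff_one hx)

theorem strictMonoOn_gFun : StrictMonoOn gFun (Iio 1 \ {0}) := by
  intro x hx y hy hxy
  rw [gFun_eq_hFun_one_sub, gFun_eq_hFun_one_sub]
  exact strictAntiOn_hFun (one_sub_mem_Ioi_diff_one hy) (one_sub_mem_Ioi_diff_one hx)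
    (sub_lt_sub_left hxy 1)

theorem stmt_8_general {a b : ℝ} (hab : ¬(a = 0 ∧ b = 0)) :
    {y ∈ Ioo (0 : ℝ) 1 | a * gFun y + b * hFun y = 0}.Subsingleton := by
  have subset_g : Ioo (0 : ℝ) 1 ⊆ Iio 1 \ {0} := fun _ hy ↦ ⟨hy.2, hy.1.ne'⟩
  have subset_h : Ioo (0 : ℝ) 1 ⊆ Ioi 0 \ {1} := fun _ hy ↦ ⟨hy.1, hy.2.ne⟩
  exact subsingleton_zeros_of_strictMonoOn_of_strictAntiOn
    (strictMonoOn_gFun.mono subset_g) (strictAntiOn_hFun.mono subset_h)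
    (fun _ hy ↦ gFun_neg (subset_g hy)) (fun _ hy ↦ hFun_neg (subset_h hy)) hab

/-- For reals `a, b` not both zero, the set
`{ y ∈ (0,1) : a·g(y) + b·h(y) = 0 }` has at most two elements. -/
theorem stmt_8 (a b : ℝ) (hab : ¬(a = 0 ∧ b = 0)) :
    {y ∈ Set.Ioo (0 : ℝ) 1 | a * gFun y + b * hFun y = 0}.encard ≤ 2 :=
  (encard_le_one_iff_subsingleton.mpr (stmt_8_general hab)).trans one_le_two
end

section
/- For every y ∈ (0,1), there exists a unique pair of real numbers (j, k) satisfying the two equations j·g(y) + k·h(y) = −1 and j·g'(y) + k·h'(y) = 0, where g' and h' are the derivatives of g and h. -/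
/-! The determinant `g h' - h g'` of the linear system in `(j, k)` is positive: both `g` and `h`
are negative, `g' > 0`, and `h' < 0` because `h` is the reflection `h y = g (1 - y)`. The sign of
`g'` is the strict inequality `1 - x⁻¹ < log x` at `x = 1 - y`. -/

theorem existsUnique_mul_add_mul_eq {K : Type*} [Field K] {a b c d : K}
    (hdet : a * d - b * c ≠ 0) (e f : K) :
    ∃! p : K × K, p.1 * a + p.2 * b = e ∧ p.1 * c + p.2 * d = f := by
  refine ⟨((e * d - b * f) / (a * d - b * c), (a * f - e * c) / (a * d - b * c)),
    ⟨?_, ?_⟩, ?_⟩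
  · rw [div_mul_eq_mul_div, div_mul_eq_mul_div, ← add_div, div_eq_iff hdet]
    ring
  · rw [div_mul_eq_mul_div, div_mul_eq_mul_div, ← add_div, div_eq_iff hdet]
    ring
  · rintro ⟨x, y⟩ ⟨he, hf⟩
    ext
    · rw [eq_div_iff hdet]
      linear_combination d * he - b * hf
    · rw [eq_div_iff hdet]
      linear_combination a * hf - c * he

theorem one_sub_inv_lt_log {x : ℝ} (hx : 0 < x) (hx1 : x ≠ 1) : 1 - x⁻¹ < Real.log x := by
  have h := Real.log_lt_sub_one_of_pos (inv_pos.2 hx) (inv_ne_one.2 hx1)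
  rw [Real.log_inv] at h
  linarith

section gFun

variable {y : ℝ}

theorem gFun_neg_s9 (hy0 : y ≠ 0) (hy1 : y < 1) : gFun y < 0 := by
  rcases hy0.lt_or_gt with hneg | hpos
  · exact div_neg_of_neg_of_pos hneg (Real.log_pos (by linarith))
  · exact div_neg_of_pos_of_neg hpos (Real.log_neg (by linarith) (by linarith))

theorem hasDerivAt_gFun (hy0 : y ≠ 0) (hy1 : y < 1) :
    HasDerivAt gFun ((Real.log (1 - y) + y / (1 - y)) / Real.log (1 - y) ^ 2) y := by
  have hsub : 0 < 1 - y := sub_pos.2 hy1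
  have hlog : Real.log (1 - y) ≠ 0 := Real.log_ne_zero_of_pos_of_ne_one hsub (by simpa using hy0)
  have hlog' := ((hasDerivAt_id' y).const_sub 1).log hsub.ne'
  refine ((hasDerivAt_id' y).fun_div hlog' hlog).congr_deriv ?_
  ring

theorem deriv_gFun_pos (hy0 : y ≠ 0) (hy1 : y < 1) : 0 < deriv gFun y := by
  have hsub : 0 < 1 - y := sub_pos.2 hy1
  have hsub1 : 1 - y ≠ 1 := by simpa using hy0
  have hlog : Real.log (1 - y) ≠ 0 := Real.log_ne_zero_of_pos_of_ne_one hsub hsub1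
  have hnum : 0 < Real.log (1 - y) + y / (1 - y) :=
    calc
      0 < Real.log (1 - y) - (1 - (1 - y)⁻¹) := sub_pos.2 (one_sub_inv_lt_log hsub hsub1)
      _ = Real.log (1 - y) + y / (1 - y) := by field
  rw [(hasDerivAt_gFun hy0 hy1).deriv]
  positivity

end gFun

theorem hFun_eq_gFun_one_sub (y : ℝ) : hFun y = gFun (1 - y) := by
  rw [hFun, gFun, sub_sub_cancel]

theorem deriv_hFun (y : ℝ) : deriv hFun y = -deriv gFun (1 - y) := by
  rw [funext hFun_eq_gFun_one_sub, deriv_comp_const_sub]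

/-- For every `y ∈ (0,1)` there is a unique pair `(j, k)` with
`j·g(y) + k·h(y) = −1` and `j·g'(y) + k·h'(y) = 0`. -/
theorem stmt_9 (y : ℝ) (hy : y ∈ Set.Ioo (0 : ℝ) 1) :
    ∃! jk : ℝ × ℝ,
      jk.1 * gFun y + jk.2 * hFun y = -1 ∧
      jk.1 * deriv gFun y + jk.2 * deriv hFun y = 0 := by
  obtain ⟨hy0, hy1⟩ := hy
  have hsub0 : 1 - y ≠ 0 := (sub_pos.2 hy1).ne'
  have hsub1 : 1 - y < 1 := sub_lt_self 1 hy0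
  have hg : gFun y < 0 := gFun_neg_s9 hy0.ne' hy1
  have hg' : 0 < deriv gFun y := deriv_gFun_pos hy0.ne' hy1
  have hh : hFun y < 0 := hFun_eq_gFun_one_sub y ▸ gFun_neg_s9 hsub0 hsub1
  have hh' : deriv hFun y < 0 := deriv_hFun y ▸ neg_neg_of_pos (deriv_gFun_pos hsub0 hsub1)
  have hdet : 0 < gFun y * deriv hFun y - hFun y * deriv gFun y :=
    sub_pos.2 ((mul_neg_of_neg_of_pos hh hg').trans (mul_pos_of_neg_of_neg hg hh'))
  exact existsUnique_mul_add_mul_eq hdet.ne' (-1) 0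
end

section
/- Suppose (Y, Z, P, Q, J, K) are functions from ℝ to ℝ with Y, Z, P, Q differentiable, Y(t), Z(t) ∈ (0,1) for all t, Y(0) = Z(0) = 1/2, P(0) = Q(0) = 1, J(0) = K(0) = ln 2, and satisfying for all t the equations Y' = ln(2)·P·Y·ln(Y), Z' = −ln(2)·Q·Z·ln(Z), P' = −ln(2)·(1−J)·P·Q, Q' = ln(2)·(1−K)·P·Q, −1 = (Y/ln Z)·J + (Z/ln Y)·K, and 0 = ((Z·ln Z + Y)/(Z·(ln Z)²))·J − ((Y·ln Y + Z)/(Y·(ln Y)²))·K. Then Y(t) + Z(t) = 1 for all t ∈ ℝ. -/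
/-!
Write `a = log Y`, `b = log Z` and let `u = Y + Z - 1`, `w = P * Y * a - Q * Z * b`. The equations
for `Y` and `Z` give `u' = c * w`. In `w'` the functions `J` and `K` enter only through
`P * Q * (Y * a * J + Z * b * K)`, and the first algebraic constraint says exactly that
`Y * a * J + Z * b * K = -(a * b)`. Hence
`w' = c * P * Q * a * b * u + c * (P * (1 + a) - Q * (1 + b)) * w`, so `(u, w)` solves a linear
system with continuous coefficients and vanishes identically once it vanishes at one time.
-/

/-- Solution of the initial value problem (IVP 1 in the paper): four ODEs
coupled with two algebraic constraints. -/
def IVPSol (Y Z P Q J K : ℝ → ℝ) : Prop :=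
  Differentiable ℝ Y ∧ Differentiable ℝ Z ∧ Differentiable ℝ P ∧ Differentiable ℝ Q ∧
  (∀ t, Y t ∈ Set.Ioo (0 : ℝ) 1) ∧ (∀ t, Z t ∈ Set.Ioo (0 : ℝ) 1) ∧
  Y 0 = 1 / 2 ∧ Z 0 = 1 / 2 ∧ P 0 = 1 ∧ Q 0 = 1 ∧
  J 0 = Real.log 2 ∧ K 0 = Real.log 2 ∧
  (∀ t, deriv Y t = Real.log 2 * P t * Y t * Real.log (Y t)) ∧
  (∀ t, deriv Z t = -(Real.log 2) * Q t * Z t * Real.log (Z t)) ∧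
  (∀ t, deriv P t = -(Real.log 2) * (1 - J t) * P t * Q t) ∧
  (∀ t, deriv Q t = Real.log 2 * (1 - K t) * P t * Q t) ∧
  (∀ t, -1 = Y t / Real.log (Z t) * J t + Z t / Real.log (Y t) * K t) ∧
  (∀ t, 0 = (Z t * Real.log (Z t) + Y t) / (Z t * (Real.log (Z t)) ^ 2) * J t
          - (Y t * Real.log (Y t) + Z t) / (Y t * (Real.log (Y t)) ^ 2) * K t)

open scoped Topology

section LinearODE

theorem eq_zero_of_hasDerivAt_clm_apply {E : Type*} [NormedAddCommGroup E] [NormedSpace ℝ E]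
    {A : ℝ → E →L[ℝ] E} {x : ℝ → E} {t₀ : ℝ} (hA : Continuous A)
    (hx : ∀ t, HasDerivAt x (A t (x t)) t) (h₀ : x t₀ = 0) : x = 0 := by
  have zeros_isClosed : IsClosed {t | x t = 0} :=
    isClosed_eq (continuous_iff_continuousAt.2 fun t ↦ (hx t).continuousAt) continuous_const
  have zeros_isOpen : IsOpen {t | x t = 0} := by
    refine isOpen_iff_mem_nhds.2 fun t (ht : x t = 0) ↦ ?_
    have norm_lt : ∀ᶠ s in 𝓝 t, ‖A s‖₊ < ‖A t‖₊ + 1 :=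
      hA.nnnorm.continuousAt.eventually_lt continuousAt_const (lt_add_one _)
    exact ODE_solution_unique_of_eventually (s := fun _ ↦ Set.univ)
      (norm_lt.mono fun s hs ↦ ((A s).lipschitz.weaken hs.le).lipschitzOnWith)
      (.of_forall fun s ↦ ⟨hx s, Set.mem_univ _⟩)
      (.of_forall fun s ↦ ⟨by simpa using hasDerivAt_const s (0 : E), Set.mem_univ _⟩) ht
  have zeros_eq_univ := IsClopen.eq_univ ⟨zeros_isClosed, zeros_isOpen⟩ ⟨t₀, h₀⟩
  exact funext (Set.eq_univ_iff_forall.1 zeros_eq_univ)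

theorem eq_zero_of_hasDerivAt_planar_linear {u w α β γ δ : ℝ → ℝ} {t₀ : ℝ}
    (hα : Continuous α) (hβ : Continuous β) (hγ : Continuous γ) (hδ : Continuous δ)
    (hu : ∀ t, HasDerivAt u (α t * u t + β t * w t) t)
    (hw : ∀ t, HasDerivAt w (γ t * u t + δ t * w t) t)
    (hu₀ : u t₀ = 0) (hw₀ : w t₀ = 0) : u = 0 ∧ w = 0 := by
  let fst := ContinuousLinearMap.fst ℝ ℝ ℝ
  let snd := ContinuousLinearMap.snd ℝ ℝ ℝ
  let A (t : ℝ) : ℝ × ℝ →L[ℝ] ℝ × ℝ := (α t • fst + β t • snd).prod (γ t • fst + δ t • snd)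
  have hA : Continuous A := continuous_clm_apply.2 fun x ↦
    show Continuous fun t ↦ (α t * x.1 + β t * x.2, γ t * x.1 + δ t * x.2) by fun_prop
  have huw : (fun t ↦ (u t, w t)) = 0 :=
    eq_zero_of_hasDerivAt_clm_apply hA (fun t ↦ (hu t).prodMk (hw t)) (Prod.ext hu₀ hw₀)
  exact ⟨funext fun t ↦ congrArg Prod.fst (congrFun huw t),
    funext fun t ↦ congrArg Prod.snd (congrFun huw t)⟩

end LinearODE

/-- The flux `P * X * log X` of `X` with driving factor `P`: the equations for `Y` and `Z` read
`Y' = c * logFlux P Y` and `Z' = -c * logFlux Q Z`. -/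
noncomputable def logFlux (P X : ℝ → ℝ) (t : ℝ) : ℝ :=
  P t * X t * Real.log (X t)

theorem hasDerivAt_logFlux {P X : ℝ → ℝ} {c p t : ℝ} (hX₀ : X t ≠ 0)
    (hX : HasDerivAt X (c * P t * X t * Real.log (X t)) t) (hP : HasDerivAt P p t) :
    HasDerivAt (logFlux P X)
      (X t * Real.log (X t) * (p + c * P t ^ 2 * (1 + Real.log (X t)))) t := by
  refine ((hP.fun_mul hX).fun_mul (hX.log hX₀)).congr_deriv ?_
  field_simp
  ring

theorem hasDerivAt_logFlux_sub_logFlux {Y Z P Q : ℝ → ℝ} {c j k t : ℝ}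
    (hY₀ : Y t ∈ Set.Ioo 0 1) (hZ₀ : Z t ∈ Set.Ioo 0 1)
    (hY : HasDerivAt Y (c * P t * Y t * Real.log (Y t)) t)
    (hZ : HasDerivAt Z (-c * Q t * Z t * Real.log (Z t)) t)
    (hP : HasDerivAt P (-c * (1 - j) * P t * Q t) t)
    (hQ : HasDerivAt Q (c * (1 - k) * P t * Q t) t)
    (hjk : -1 = Y t / Real.log (Z t) * j + Z t / Real.log (Y t) * k) :
    HasDerivAt (logFlux P Y - logFlux Q Z)
      (c * P t * Q t * Real.log (Y t) * Real.log (Z t) * (Y t + Z t - 1) +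
        c * (P t * (1 + Real.log (Y t)) - Q t * (1 + Real.log (Z t))) *
          (logFlux P Y t - logFlux Q Z t)) t := by
  have hlogY : Real.log (Y t) ≠ 0 := (Real.log_neg hY₀.1 hY₀.2).ne
  have hlogZ : Real.log (Z t) ≠ 0 := (Real.log_neg hZ₀.1 hZ₀.2).ne
  have hjk' : Y t * Real.log (Y t) * j + Z t * Real.log (Z t) * k =
      -(Real.log (Y t) * Real.log (Z t)) := by
    field_simp at hjk
    linear_combination -hjk
  refine ((hasDerivAt_logFlux hY₀.1.ne' hY hP).sub
    (hasDerivAt_logFlux hZ₀.1.ne' hZ hQ)).congr_deriv ?_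
  simp only [logFlux]
  linear_combination c * P t * Q t * hjk'

theorem stmt_14_general {Y Z P Q J K : ℝ → ℝ} {c t₀ : ℝ}
    (hY_mem : ∀ t, Y t ∈ Set.Ioo 0 1) (hZ_mem : ∀ t, Z t ∈ Set.Ioo 0 1)
    (hY : ∀ t, HasDerivAt Y (c * P t * Y t * Real.log (Y t)) t)
    (hZ : ∀ t, HasDerivAt Z (-c * Q t * Z t * Real.log (Z t)) t)
    (hP : ∀ t, HasDerivAt P (-c * (1 - J t) * P t * Q t) t)
    (hQ : ∀ t, HasDerivAt Q (c * (1 - K t) * P t * Q t) t)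
    (hJK : ∀ t, -1 = Y t / Real.log (Z t) * J t + Z t / Real.log (Y t) * K t)
    (h_sum : Y t₀ + Z t₀ = 1)
    (h_flux : P t₀ * Y t₀ * Real.log (Y t₀) = Q t₀ * Z t₀ * Real.log (Z t₀)) (t : ℝ) :
    Y t + Z t = 1 := by
  have hu (t : ℝ) : HasDerivAt (fun s ↦ Y s + Z s - 1)
      (0 * (Y t + Z t - 1) + c * (logFlux P Y t - logFlux Q Z t)) t := by
    refine (((hY t).fun_add (hZ t)).sub_const 1).congr_deriv ?_
    simp only [logFlux]
    ring
  have hw (t : ℝ) := hasDerivAt_logFlux_sub_logFlux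
    (hY_mem t) (hZ_mem t) (hY t) (hZ t) (hP t) (hQ t) (hJK t)
  have cP : Continuous P := continuous_iff_continuousAt.2 fun t ↦ (hP t).continuousAt
  have cQ : Continuous Q := continuous_iff_continuousAt.2 fun t ↦ (hQ t).continuousAt
  have clogY : Continuous fun t ↦ Real.log (Y t) :=
    continuous_iff_continuousAt.2 fun t ↦ (hY t).continuousAt.log (hY_mem t).1.ne'
  have clogZ : Continuous fun t ↦ Real.log (Z t) :=
    continuous_iff_continuousAt.2 fun t ↦ (hZ t).continuousAt.log (hZ_mem t).1.ne'
  have defects_eq_zero := eq_zero_of_hasDerivAt_planar_linear continuous_const continuous_const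
    (by fun_prop) (by fun_prop) hu hw (sub_eq_zero.2 h_sum) (sub_eq_zero.2 h_flux)
  exact sub_eq_zero.1 (congrFun defects_eq_zero.1 t)

/-- Any solution of the IVP satisfies `Y(t) + Z(t) = 1` for all `t`. -/
theorem stmt_14 (Y Z P Q J K : ℝ → ℝ) (h : IVPSol Y Z P Q J K) :
    ∀ t : ℝ, Y t + Z t = 1 := by
  obtain ⟨dY, dZ, dP, dQ, hY, hZ, Y₀, Z₀, P₀, Q₀, -, -, eY, eZ, eP, eQ, hJK, -⟩ := h
  exact stmt_14_general (t₀ := 0) hY hZ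
    (fun t ↦ eY t ▸ (dY t).hasDerivAt) (fun t ↦ eZ t ▸ (dZ t).hasDerivAt)
    (fun t ↦ eP t ▸ (dP t).hasDerivAt) (fun t ↦ eQ t ▸ (dQ t).hasDerivAt) hJK
    (by norm_num [Y₀, Z₀]) (by rw [Y₀, Z₀, P₀, Q₀])
end

section
/- Suppose (Y, Z, P, Q, J, K) are functions from ℝ to ℝ with Y, Z, P, Q differentiable, Y(t), Z(t) ∈ (0,1) for all t, Y(0) = Z(0) = 1/2, P(0) = Q(0) = 1, J(0) = K(0) = ln 2, and satisfying for all t the equations Y' = ln(2)·P·Y·ln(Y), Z' = −ln(2)·Q·Z·ln(Z), P' = −ln(2)·(1−J)·P·Q, Q' = ln(2)·(1−K)·P·Q, −1 = (Y/ln Z)·J + (Z/ln Y)·K, and 0 = ((Z·ln Z + Y)/(Z·(ln Z)²))·J − ((Y·ln Y + Z)/(Y·(ln Y)²))·K. Then for every t ≥ 0 the following bounds hold: 2^(−2^t) ≤ Y(t) ≤ 1 − 2^(−2^(−t)); 2^(−2^(−t)) ≤ Z(t) ≤ 1 − 2^(−2^t); e^(1−2^t) ≤ P(t) ≤ 1;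 and 1 ≤ Q(t) ≤ 2^t. -/
/-!
Along a solution put `S = Y + Z - 1` and `w = P Y log Y - Q Z log Z`, so that `S' = (log 2) w`. The
first constraint removes `J` and `K` from `w'`, which becomes a linear combination of `S` and `w`
with continuous coefficients. Both vanish at time `0`, hence identically: `Y + Z = 1`.

On the line `Y + Z = 1` the two constraints can be solved for `J` and `K`, and elementary estimates
of the logarithm give `0 < J ≤ 1` and `0 < K ≤ 1`. The equation `P' = -(log 2) (1 - J) Q P` then
keeps `P` positive, and `w = 0` transfers the sign to `Q`. So `P` decreases and `Q` increases, and
for `t ≥ 0` the remaining bounds come from comparing logarithmic derivatives, each with the help of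
the bounds before it: `Q' / Q ≤ log 2`, `P' / P ≥ -(log 2) 2 ^ t`, `(log Y)' ≥ (log 2) log Y` and
`(log Z)' ≥ -(log 2) log Z`.
-/

open Real Set Filter Topology Asymptotics InformationTheory

section LogInequalities

lemma klFun_pos {x : ℝ} (hx : 0 ≤ x) (hx1 : x ≠ 1) : 0 < klFun x :=
  (klFun_nonneg hx).lt_of_ne' fun h => hx1 ((klFun_eq_zero_iff hx).1 h)

lemma sq_le_sinh_sq (x : ℝ) : x ^ 2 ≤ sinh x ^ 2 :=
  sq_le_sq.2 (abs_sinh x ▸ self_le_sinh_iff.2 (abs_nonneg x))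

lemma mul_log_sq_le_one_sub_sq {x : ℝ} (hx : 0 < x) : x * log x ^ 2 ≤ (1 - x) ^ 2 := by
  have hsqrt : 0 < √x := sqrt_pos.2 hx
  calc x * log x ^ 2 = 4 * √x ^ 2 * log √x ^ 2 := by rw [log_sqrt hx.le, sq_sqrt hx.le]; ring
    _ ≤ 4 * √x ^ 2 * sinh (log √x) ^ 2 := by gcongr ?_ * ?_; exact sq_le_sinh_sq _
    _ = (1 - √x ^ 2) ^ 2 := by rw [sinh_log hsqrt]; field_simp; ring
    _ = (1 - x) ^ 2 := by rw [sq_sqrt hx.le]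

lemma two_mul_one_sub_le_neg_log_mul_one_add {x : ℝ} (hx : 0 < x) (hx1 : x ≤ 1) :
    2 * (1 - x) ≤ -log x * (1 + x) := by
  have h := le_log_one_add_of_nonneg (x := x⁻¹ - 1) (sub_nonneg.2 ((one_le_inv₀ hx).2 hx1))
  rw [add_sub_cancel, log_inv, div_le_iff₀ (by linarith [inv_pos.2 hx])] at h
  calc 2 * (1 - x) = 2 * (x⁻¹ - 1) * x := by field_simp
    _ ≤ -log x * (x⁻¹ - 1 + 2) * x := by gcongr
    _ = -log x * (1 + x) := by field_simp; ring

lemma two_mul_klFun_le {x : ℝ} (hx : 0 < x) (hx1 : x ≤ 1) : 2 * klFun x ≤ -log x * (1 - x) := by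
  rw [klFun_apply]
  linarith [two_mul_one_sub_le_neg_log_mul_one_add hx hx1]

lemma klFun_mul_log_sq_le {y z : ℝ} (hy : 0 < y) (hz : 0 < z) (hyz : y + z = 1) :
    klFun y * log z ^ 2 ≤ -(y * (klFun z * log y + klFun y * log z)) := by
  have hylog : 0 ≤ -log y := neg_nonneg.2 (log_nonpos hy.le (by linarith))
  have hzlog : y ≤ -log z := by linarith [log_le_sub_one_of_pos hz]
  have hkly : 2 * klFun y ≤ -log y * z := by
    simpa [← hyz] using two_mul_klFun_le hy (by linarith)
  have hklz : klFun z = z * log z + y := by rw [klFun_apply]; linarith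
  have hquad : z * -log z * (-log z - y) ≤ 2 * klFun z * y := by
    have hsq : z * log z ^ 2 ≤ y ^ 2 := by
      simpa [← hyz] using mul_log_sq_le_one_sub_sq hz
    have hlin : 0 ≤ z * log z + y := hklz ▸ klFun_nonneg hz.le
    rw [hklz]
    linarith [mul_nonneg hy.le hlin]
  have h : 2 * (klFun y * (-log z * (-log z - y))) ≤ 2 * (-log y * (klFun z * y)) :=
    calc 2 * (klFun y * (-log z * (-log z - y)))
        = 2 * klFun y * (-log z * (-log z - y)) := by ring
      _ ≤ -log y * z * (-log z * (-log z - y)) :=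
          mul_le_mul_of_nonneg_right hkly (mul_nonneg (hy.le.trans hzlog) (sub_nonneg.2 hzlog))
      _ = -log y * (z * -log z * (-log z - y)) := by ring
      _ ≤ -log y * (2 * klFun z * y) := mul_le_mul_of_nonneg_left hquad hylog
      _ = 2 * (-log y * (klFun z * y)) := by ring
  linarith

/-- The hypotheses `h₁` and `h₂` are the two constraints of the problem, cleared of denominators:
on the line `y + z = 1` the numerators of the second one are values of `klFun`. -/
lemma mem_Ioc_of_constraints {y z j k : ℝ} (hy : 0 < y) (hz : 0 < z) (hyz : y + z = 1)
    (h₁ : y * log y * j + z * log z * k = -(log y * log z))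
    (h₂ : klFun z * (y * log y ^ 2) * j = klFun y * (z * log z ^ 2) * k) :
    j ∈ Ioc 0 1 := by
  have hylog : log y < 0 := log_neg hy (by linarith)
  have hzlog : log z < 0 := log_neg hz (by linarith)
  have hkly : 0 < klFun y := klFun_pos hy.le (by linarith)
  have hklz : 0 < klFun z := klFun_pos hz.le (by linarith)
  have hD : 0 < -(y * (klFun z * log y + klFun y * log z)) :=
    neg_pos.2 (mul_neg_of_pos_of_neg hy
      (add_neg (mul_neg_of_pos_of_neg hklz hylog) (mul_neg_of_pos_of_neg hkly hzlog)))
  have hj : -(y * (klFun z * log y + klFun y * log z)) * j = klFun y * log z ^ 2 := by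
    refine mul_left_cancel₀ hylog.ne ?_
    linear_combination -h₂ - klFun y * log z * h₁
  have hpos : 0 < klFun y * log z ^ 2 := mul_pos hkly (sq_pos_of_neg hzlog)
  refine ⟨pos_of_mul_pos_right (hj ▸ hpos) hD.le, ?_⟩
  refine le_of_mul_le_mul_left ?_ hD
  rw [hj, mul_one]
  exact klFun_mul_log_sq_le hy hz hyz

end LogInequalities

lemma isBigO_mul_of_continuousAt {α R F : Type*} [TopologicalSpace α] [NormedRing R]
    [NormedAddCommGroup F] {c g : α → R} {f : α → F} {x : α} (hc : ContinuousAt c x)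
    (hg : g =O[𝓝 x] f) : (fun t => c t * g t) =O[𝓝 x] f := by
  simpa only [one_mul, isBigO_norm_right] using (hc.tendsto.isBigO_one ℝ).mul hg.norm_right

section ZeroUniqueness

variable {E : Type*} [NormedAddCommGroup E] [NormedSpace ℝ E] {f f' : ℝ → E}

lemma eventually_nhdsGE_eq_zero_of_deriv_isBigO {x : ℝ} (hf : ∀ t, HasDerivAt f (f' t) t)
    (hO : f' =O[𝓝 x] f) (hx : f x = 0) : ∀ᶠ t in 𝓝[≥] x, f t = 0 := by
  obtain ⟨C, hC⟩ := hO.bound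
  obtain ⟨u, hxu, hu⟩ := mem_nhdsGE_iff_exists_Icc_subset.1 (mem_nhdsWithin_of_mem_nhds hC)
  filter_upwards [Icc_mem_nhdsGE hxu]
  exact eq_zero_of_abs_deriv_le_mul_abs_self_of_eq_zero_right
    (fun t _ => (hf t).continuousAt.continuousWithinAt) (fun t _ => (hf t).hasDerivWithinAt) hx
    fun t ht => hu (Ico_subset_Icc_self ht)

lemma eventually_eq_zero_of_deriv_isBigO {x : ℝ} (hf : ∀ t, HasDerivAt f (f' t) t)
    (hO : f' =O[𝓝 x] f) (hx : f x = 0) : ∀ᶠ t in 𝓝 x, f t = 0 := by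
  have hneg : Tendsto Neg.neg (𝓝 (-x)) (𝓝 x) := by
    simpa using (continuous_neg (G := ℝ)).tendsto (-x)
  have hright := eventually_nhdsGE_eq_zero_of_deriv_isBigO hf hO hx
  have hleft : ∀ᶠ t in 𝓝[≥] (-x), f (-t) = 0 :=
    eventually_nhdsGE_eq_zero_of_deriv_isBigO (f' := fun t => -f' (-t))
      (fun t => ((hf (-t)).scomp t (hasDerivAt_neg t)).congr_deriv (neg_one_smul ℝ _))
      (hO.comp_tendsto hneg).neg_left (by simpa using hx)
  rw [← nhdsLE_sup_nhdsGE, eventually_sup]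
  refine ⟨?_, hright⟩
  have := (tendsto_neg_nhdsLE (a := x)).eventually hleft
  simpa using this

theorem eq_zero_of_deriv_isBigO (hf : ∀ t, HasDerivAt f (f' t) t)
    (hO : ∀ x, f x = 0 → f' =O[𝓝 x] f) {a : ℝ} (ha : f a = 0) : f = 0 := by
  have hcont : Continuous f := continuous_iff_continuousAt.2 fun t => (hf t).continuousAt
  have hclopen : IsClopen {t | f t = 0} :=
    ⟨isClosed_eq hcont continuous_const, isOpen_iff_eventually.2 fun x hx =>
      eventually_eq_zero_of_deriv_isBigO hf (hO x hx) hx⟩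
  exact funext fun t => eq_univ_iff_forall.1 (hclopen.eq_univ ⟨a, ha⟩) t

end ZeroUniqueness

lemma mul_exp_sub_le_of_mul_le_deriv {f f' φ φ' : ℝ → ℝ} {a b : ℝ}
    (hf : ∀ t, a ≤ t → HasDerivAt f (f' t) t) (hφ : ∀ t, a ≤ t → HasDerivAt φ (φ' t) t)
    (h : ∀ t, a ≤ t → φ' t * f t ≤ f' t) (hab : a ≤ b) : f a * exp (φ b - φ a) ≤ f b := by
  have hd : ∀ t, a ≤ t →
      HasDerivAt (fun t => f t * exp (-φ t)) ((f' t - φ' t * f t) * exp (-φ t)) t :=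
    fun t ht => ((hf t ht).mul (hφ t ht).neg.exp).congr_deriv (by
      simp only [Pi.neg_apply]; ring)
  have hmono : MonotoneOn (fun t => f t * exp (-φ t)) (Ici a) :=
    monotoneOn_of_hasDerivWithinAt_nonneg (convex_Ici a)
      (fun t ht => (hd t ht).continuousAt.continuousWithinAt)
      (fun t ht => (hd t (interior_subset ht)).hasDerivWithinAt)
      fun t ht => mul_nonneg (sub_nonneg.2 (h t (interior_subset ht))) (exp_pos _).le
  calc f a * exp (φ b - φ a) = f a * exp (-φ a) * exp (φ b) := by
        rw [mul_assoc, ← exp_add, neg_add_eq_sub]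
    _ ≤ f b * exp (-φ b) * exp (φ b) :=
        mul_le_mul_of_nonneg_right (hmono self_mem_Ici hab hab) (exp_pos _).le
    _ = f b := by rw [mul_assoc, ← exp_add, neg_add_cancel, exp_zero, mul_one]

/-- The quantity `P Y log Y - Q Z log Z`, which along a solution is the derivative of `Y + Z` up to
the factor `log 2`. -/
noncomputable def sumRate (Y Z P Q : ℝ → ℝ) (t : ℝ) : ℝ :=
  P t * (Y t * log (Y t)) - Q t * (Z t * log (Z t))

namespace IVPSol

variable {Y Z P Q J K : ℝ → ℝ} {t : ℝ}

lemma hasDerivAt_Y (h : IVPSol Y Z P Q J K) (t : ℝ) :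
    HasDerivAt Y (log 2 * P t * Y t * log (Y t)) t := by
  obtain ⟨dY, -, -, -, -, -, -, -, -, -, -, -, eY, -⟩ := h
  exact eY t ▸ (dY t).hasDerivAt

lemma hasDerivAt_Z (h : IVPSol Y Z P Q J K) (t : ℝ) :
    HasDerivAt Z (-(log 2) * Q t * Z t * log (Z t)) t := by
  obtain ⟨-, dZ, -, -, -, -, -, -, -, -, -, -, -, eZ, -⟩ := h
  exact eZ t ▸ (dZ t).hasDerivAt

lemma hasDerivAt_P (h : IVPSol Y Z P Q J K) (t : ℝ) :
    HasDerivAt P (-(log 2) * (1 - J t) * P t * Q t) t := by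
  obtain ⟨-, -, dP, -, -, -, -, -, -, -, -, -, -, -, eP, -⟩ := h
  exact eP t ▸ (dP t).hasDerivAt

lemma hasDerivAt_Q (h : IVPSol Y Z P Q J K) (t : ℝ) :
    HasDerivAt Q (log 2 * (1 - K t) * P t * Q t) t := by
  obtain ⟨-, -, -, dQ, -, -, -, -, -, -, -, -, -, -, -, eQ, -⟩ := h
  exact eQ t ▸ (dQ t).hasDerivAt

lemma initial_values (h : IVPSol Y Z P Q J K) : Y 0 = 1 / 2 ∧ Z 0 = 1 / 2 ∧ P 0 = 1 ∧ Q 0 = 1 := by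
  obtain ⟨-, -, -, -, -, -, hY₀, hZ₀, hP₀, hQ₀, -⟩ := h
  exact ⟨hY₀, hZ₀, hP₀, hQ₀⟩

lemma Y_pos (h : IVPSol Y Z P Q J K) (t : ℝ) : 0 < Y t := (h.2.2.2.2.1 t).1

lemma Z_pos (h : IVPSol Y Z P Q J K) (t : ℝ) : 0 < Z t := (h.2.2.2.2.2.1 t).1

lemma log_Y_neg (h : IVPSol Y Z P Q J K) (t : ℝ) : log (Y t) < 0 :=
  log_neg (h.Y_pos t) (h.2.2.2.2.1 t).2

lemma log_Z_neg (h : IVPSol Y Z P Q J K) (t : ℝ) : log (Z t) < 0 :=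
  log_neg (h.Z_pos t) (h.2.2.2.2.2.1 t).2

lemma mul_log_J_add_mul_log_K (h : IVPSol Y Z P Q J K) (t : ℝ) :
    Y t * log (Y t) * J t + Z t * log (Z t) * K t = -(log (Y t) * log (Z t)) := by
  have hY := (h.log_Y_neg t).ne
  have hZ := (h.log_Z_neg t).ne
  obtain ⟨-, -, -, -, -, -, -, -, -, -, -, -, -, -, -, -, h₁, -⟩ := h
  have := h₁ t
  field_simp at this
  linarith

lemma add_mul_J_eq_add_mul_K (h : IVPSol Y Z P Q J K) (t : ℝ) :
    (Z t * log (Z t) + Y t) * (Y t * log (Y t) ^ 2) * J t =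
      (Y t * log (Y t) + Z t) * (Z t * log (Z t) ^ 2) * K t := by
  have hYlog := (h.log_Y_neg t).ne
  have hZlog := (h.log_Z_neg t).ne
  have hY := (h.Y_pos t).ne'
  have hZ := (h.Z_pos t).ne'
  obtain ⟨-, -, -, -, -, -, -, -, -, -, -, -, -, -, -, -, -, h₂⟩ := h
  have := h₂ t
  field_simp at this
  linarith

lemma hasDerivAt_log_Y (h : IVPSol Y Z P Q J K) (t : ℝ) :
    HasDerivAt (fun s => log (Y s)) (log 2 * P t * log (Y t)) t := by
  have := (h.Y_pos t).ne'
  exact ((h.hasDerivAt_Y t).log this).congr_deriv (by field_simp)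

lemma hasDerivAt_log_Z (h : IVPSol Y Z P Q J K) (t : ℝ) :
    HasDerivAt (fun s => log (Z s)) (-(log 2) * Q t * log (Z t)) t := by
  have := (h.Z_pos t).ne'
  exact ((h.hasDerivAt_Z t).log this).congr_deriv (by field_simp)

lemma hasDerivAt_add_sub_one (h : IVPSol Y Z P Q J K) (t : ℝ) :
    HasDerivAt (fun s => Y s + Z s - 1) (log 2 * sumRate Y Z P Q t) t :=
  (((h.hasDerivAt_Y t).add (h.hasDerivAt_Z t)).sub_const 1).congr_deriv (by
    rw [sumRate]; ring)

lemma hasDerivAt_sumRate (h : IVPSol Y Z P Q J K) (t : ℝ) :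
    HasDerivAt (sumRate Y Z P Q)
      (log 2 * (P t * Q t * log (Y t) * log (Z t)) * (Y t + Z t - 1) +
        log 2 * (P t * (log (Y t) + 1) - Q t * (log (Z t) + 1)) * sumRate Y Z P Q t) t := by
  have hY := (hasDerivAt_mul_log (h.Y_pos t).ne').comp t (h.hasDerivAt_Y t)
  have hZ := (hasDerivAt_mul_log (h.Z_pos t).ne').comp t (h.hasDerivAt_Z t)
  refine (((h.hasDerivAt_P t).mul hY).sub ((h.hasDerivAt_Q t).mul hZ)).congr_deriv ?_
  simp only [Function.comp_apply, sumRate]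
  linear_combination log 2 * P t * Q t * h.mul_log_J_add_mul_log_K t

lemma add_sub_one_sumRate_eq_zero (h : IVPSol Y Z P Q J K) :
    (fun t => (Y t + Z t - 1, sumRate Y Z P Q t)) = 0 := by
  obtain ⟨hY₀, hZ₀, hP₀, hQ₀⟩ := h.initial_values
  refine eq_zero_of_deriv_isBigO
    (fun t => (h.hasDerivAt_add_sub_one t).prodMk (h.hasDerivAt_sumRate t))
    (fun x _ => ?_) (a := 0) (by norm_num [sumRate, hY₀, hZ₀, hP₀, hQ₀])
  have cP := (h.hasDerivAt_P x).continuousAt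
  have cQ := (h.hasDerivAt_Q x).continuousAt
  have clY := (h.hasDerivAt_log_Y x).continuousAt
  have clZ := (h.hasDerivAt_log_Z x).continuousAt
  exact (isBigO_mul_of_continuousAt (by fun_prop) isBigO_snd_prod).prod_left
    ((isBigO_mul_of_continuousAt (by fun_prop) isBigO_fst_prod).add
      (isBigO_mul_of_continuousAt (by fun_prop) isBigO_snd_prod))

lemma add_eq_one (h : IVPSol Y Z P Q J K) (t : ℝ) : Y t + Z t = 1 :=
  sub_eq_zero.1 (congrArg Prod.fst (congrFun h.add_sub_one_sumRate_eq_zero t))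

lemma mul_mul_log_eq (h : IVPSol Y Z P Q J K) (t : ℝ) :
    P t * (Y t * log (Y t)) = Q t * (Z t * log (Z t)) :=
  sub_eq_zero.1 (congrArg Prod.snd (congrFun h.add_sub_one_sumRate_eq_zero t))

lemma klFun_mul_J_eq_klFun_mul_K (h : IVPSol Y Z P Q J K) (t : ℝ) :
    klFun (Z t) * (Y t * log (Y t) ^ 2) * J t = klFun (Y t) * (Z t * log (Z t) ^ 2) * K t := by
  have hY : klFun (Y t) = Y t * log (Y t) + Z t := by rw [klFun_apply, ← h.add_eq_one t]; ring
  have hZ : klFun (Z t) = Z t * log (Z t) + Y t := by rw [klFun_apply, ← h.add_eq_one t]; ring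
  rw [hY, hZ, h.add_mul_J_eq_add_mul_K t]

lemma J_mem_Ioc (h : IVPSol Y Z P Q J K) (t : ℝ) : J t ∈ Ioc 0 1 :=
  mem_Ioc_of_constraints (h.Y_pos t) (h.Z_pos t) (h.add_eq_one t) (h.mul_log_J_add_mul_log_K t)
    (h.klFun_mul_J_eq_klFun_mul_K t)

lemma K_mem_Ioc (h : IVPSol Y Z P Q J K) (t : ℝ) : K t ∈ Ioc 0 1 :=
  mem_Ioc_of_constraints (h.Z_pos t) (h.Y_pos t) (by linarith [h.add_eq_one t])
    (by linarith [h.mul_log_J_add_mul_log_K t]) (h.klFun_mul_J_eq_klFun_mul_K t).symm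

lemma P_ne_zero (h : IVPSol Y Z P Q J K) (t : ℝ) : P t ≠ 0 := by
  intro ht
  have hJ (x : ℝ) : (fun t => 1 - J t) =O[𝓝 x] (fun _ => (1 : ℝ)) :=
    .of_bound 1 <| .of_forall fun t => by
      have := h.J_mem_Ioc t
      rw [norm_one, mul_one, norm_eq_abs, abs_le]
      constructor <;> linarith [this.1, this.2]
  have hP : P = 0 := by
    refine eq_zero_of_deriv_isBigO h.hasDerivAt_P (fun x _ => ?_) ht
    have hQ := (h.hasDerivAt_Q x).continuousAt.tendsto.isBigO_one ℝ
    simpa using (((hJ x).const_mul_left (-(log 2))).mul (isBigO_refl P (𝓝 x))).mul hQ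
  simpa [hP] using h.initial_values.2.2.1

lemma P_pos (h : IVPSol Y Z P Q J K) (t : ℝ) : 0 < P t := by
  by_contra! ht
  have hP₀ : 0 ≤ P 0 := by simp [h.initial_values.2.2.1]
  have hcont : Continuous P := h.2.2.1.continuous
  obtain ⟨s, hs⟩ := mem_range_of_exists_le_of_exists_ge hcont ⟨t, ht⟩ ⟨0, hP₀⟩
  exact h.P_ne_zero s hs

lemma Q_pos (h : IVPSol Y Z P Q J K) (t : ℝ) : 0 < Q t := by
  have hY : Y t * log (Y t) < 0 := mul_neg_of_pos_of_neg (h.Y_pos t) (h.log_Y_neg t)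
  have hZ : Z t * log (Z t) < 0 := mul_neg_of_pos_of_neg (h.Z_pos t) (h.log_Z_neg t)
  exact pos_of_mul_neg_left (h.mul_mul_log_eq t ▸ mul_neg_of_pos_of_neg (h.P_pos t) hY) hZ.le

lemma antitone_P (h : IVPSol Y Z P Q J K) : Antitone P :=
  antitone_of_hasDerivAt_nonpos h.hasDerivAt_P fun t => by
    have hJ : 0 ≤ 1 - J t := sub_nonneg.2 (h.J_mem_Ioc t).2
    have hP := h.P_pos t
    have hQ := h.Q_pos t
    have : 0 ≤ log 2 * (1 - J t) * P t * Q t := by positivity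
    simpa using this

lemma monotone_Q (h : IVPSol Y Z P Q J K) : Monotone Q :=
  monotone_of_hasDerivAt_nonneg h.hasDerivAt_Q fun t => by
    have hK : 0 ≤ 1 - K t := sub_nonneg.2 (h.K_mem_Ioc t).2
    have hP := h.P_pos t
    have hQ := h.Q_pos t
    have : 0 ≤ log 2 * (1 - K t) * P t * Q t := by positivity
    exact this

lemma P_le_one (h : IVPSol Y Z P Q J K) (ht : 0 ≤ t) : P t ≤ 1 :=
  h.initial_values.2.2.1 ▸ h.antitone_P ht

lemma one_le_Q (h : IVPSol Y Z P Q J K) (ht : 0 ≤ t) : 1 ≤ Q t :=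
  h.initial_values.2.2.2 ▸ h.monotone_Q ht

lemma Q_le_two_rpow (h : IVPSol Y Z P Q J K) (ht : 0 ≤ t) : Q t ≤ 2 ^ t := by
  have hlog : 0 < log 2 := log_pos one_lt_two
  have hle : ∀ s, 0 ≤ s → log 2 * -Q s ≤ -(log 2 * (1 - K s) * P s * Q s) := by
    intro s hs
    have hKP : (1 - K s) * P s ≤ 1 :=
      mul_le_one₀ (by linarith [(h.K_mem_Ioc s).1]) (h.P_pos s).le (h.P_le_one hs)
    linarith [mul_le_mul_of_nonneg_left hKP (mul_pos hlog (h.Q_pos s)).le]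
  have := mul_exp_sub_le_of_mul_le_deriv (fun s _ => (h.hasDerivAt_Q s).neg)
    (fun s _ => hasDerivAt_const_mul (log 2)) hle ht
  simpa [h.initial_values.2.2.2, rpow_def_of_pos] using this

lemma exp_one_sub_two_rpow_le_P (h : IVPSol Y Z P Q J K) (ht : 0 ≤ t) :
    exp (1 - 2 ^ t) ≤ P t := by
  have hlog : 0 < log 2 := log_pos one_lt_two
  have hle : ∀ s, 0 ≤ s → -(2 ^ s * log 2) * P s ≤ -(log 2) * (1 - J s) * P s * Q s := by
    intro s hs
    have hJQ : (1 - J s) * Q s ≤ 2 ^ s :=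
      (mul_le_of_le_one_left (h.Q_pos s).le (by linarith [(h.J_mem_Ioc s).1])).trans
        (h.Q_le_two_rpow hs)
    linarith [mul_le_mul_of_nonneg_left hJQ (mul_pos hlog (h.P_pos s)).le]
  have := mul_exp_sub_le_of_mul_le_deriv (fun s _ => h.hasDerivAt_P s)
    (fun s _ => (hasStrictDerivAt_const_rpow two_pos s).hasDerivAt.neg) hle ht
  simpa [h.initial_values.2.2.1, neg_add_eq_sub] using this

lemma two_rpow_neg_two_rpow_le_Y (h : IVPSol Y Z P Q J K) (ht : 0 ≤ t) :
    2 ^ (-2 ^ t : ℝ) ≤ Y t := by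
  have hle : ∀ s, 0 ≤ s → log 2 * log (Y s) ≤ log 2 * P s * log (Y s) := fun s hs =>
    mul_le_mul_of_nonpos_right (mul_le_of_le_one_right (log_pos one_lt_two).le (h.P_le_one hs))
      (h.log_Y_neg s).le
  have := mul_exp_sub_le_of_mul_le_deriv (fun s _ => h.hasDerivAt_log_Y s)
    (fun s _ => hasDerivAt_const_mul (log 2)) hle ht
  rw [rpow_le_iff_le_log two_pos (h.Y_pos t)]
  simpa [h.initial_values.1, rpow_def_of_pos, mul_comm] using this

lemma two_rpow_neg_two_rpow_neg_le_Z (h : IVPSol Y Z P Q J K) (ht : 0 ≤ t) :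
    2 ^ (-2 ^ (-t) : ℝ) ≤ Z t := by
  have hle : ∀ s, 0 ≤ s → -(log 2) * log (Z s) ≤ -(log 2) * Q s * log (Z s) := fun s hs =>
    mul_le_mul_of_nonpos_right
      (mul_le_of_one_le_right (neg_nonpos.2 (log_pos one_lt_two).le) (h.one_le_Q hs))
      (h.log_Z_neg s).le
  have := mul_exp_sub_le_of_mul_le_deriv (fun s _ => h.hasDerivAt_log_Z s)
    (fun s _ => hasDerivAt_const_mul (-log 2)) hle ht
  rw [rpow_le_iff_le_log two_pos (h.Z_pos t)]
  simpa [h.initial_values.2.1, rpow_def_of_pos, mul_comm] using this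

end IVPSol

/-- Bounds maintained by any solution of the IVP for `t ≥ 0`. -/
theorem stmt_15 (Y Z P Q J K : ℝ → ℝ) (h : IVPSol Y Z P Q J K) :
    ∀ t : ℝ, 0 ≤ t →
      (2 : ℝ) ^ (-(2 : ℝ) ^ t) ≤ Y t ∧ Y t ≤ 1 - (2 : ℝ) ^ (-(2 : ℝ) ^ (-t)) ∧
      (2 : ℝ) ^ (-(2 : ℝ) ^ (-t)) ≤ Z t ∧ Z t ≤ 1 - (2 : ℝ) ^ (-(2 : ℝ) ^ t) ∧
      Real.exp (1 - (2 : ℝ) ^ t) ≤ P t ∧ P t ≤ 1 ∧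
      1 ≤ Q t ∧ Q t ≤ (2 : ℝ) ^ t := by
  intro t ht
  have hsum : Y t + Z t = 1 := h.add_eq_one t
  have hY : 2 ^ (-2 ^ t : ℝ) ≤ Y t := h.two_rpow_neg_two_rpow_le_Y ht
  have hZ : 2 ^ (-2 ^ (-t) : ℝ) ≤ Z t := h.two_rpow_neg_two_rpow_neg_le_Z ht
  exact ⟨hY, by linarith, hZ, by linarith, h.exp_one_sub_two_rpow_le_P ht, h.P_le_one ht,
    h.one_le_Q ht, h.Q_le_two_rpow ht⟩
end
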